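/- Let α, β be real numbers, let μ be a complex number with Im μ ≠ 0, and set A = [[α, −β], [1, 0]] and H = [[μ, μ̄], [1, 1]] as 2×2 complex matrices (H is invertible since Im μ ≠ 0). Then, with ‖M‖ denoting the operator norm on ℂ² induced by the maximum norm (i.e., the maximum over rows of the sum of the absolute values of the entries in that row), one has ‖H⁻¹AH‖ = ( |μ² − αμ + β| + | |μ|² − αμ + β | ) / |μ − μ̄|. -/

import Mathlib

/-!
Since `adj H = !![1, -μ̄; -1, μ]`, each entry of `(μ - μ̄) H⁻¹ A H` is, up to sign, the value of
`s t - α s + β` at a pair of points of `{μ, μ̄}`. As `α` and `β` are real, conjugating both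
points conjugates this value, and it exchanges the moduli in the two rows. Hence the two absolute
row sums agree, and their maximum is either of them.
-/

section CompanionForm

variable {R S : Type*} [CommRing R] [CommRing S]

/-- The two-variable form of the characteristic polynomial `s² - a s + b` of the companion matrix
`!![a, -b; 1, 0]`, given by pairing with a row and a column vector:
`companionForm a b s t = -(1, -t) !![a, -b; 1, 0] (s, 1)ᵀ`. It is not symmetric in `s` and `t`. -/
def companionForm (a b s t : R) : R :=
  s * t - a * s + b

theorem companionForm_self (a b s : R) : companionForm a b s s = s ^ 2 - a * s + b := by
  rw [companionForm, sq]

theorem map_companionForm (f : R →+* S) (a b s t : R) :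
    f (companionForm a b s t) = companionForm (f a) (f b) (f s) (f t) := by
  simp only [companionForm, map_add, map_sub, map_mul]

theorem adjugate_mul_companion_mul (a b x y : R) :
    (!![x, y; 1, 1]).adjugate * !![a, -b; 1, 0] * !![x, y; 1, 1] =
      !![-companionForm a b x y, -companionForm a b y y;
        companionForm a b x x, companionForm a b y x] := by
  rw [Matrix.adjugate_fin_two_of, Matrix.mul_fin_two, Matrix.mul_fin_two]
  ext i j
  fin_cases i <;> fin_cases j <;> dsimp [companionForm] <;> ring

theorem sub_smul_inv_mul_companion_mul (a b : R) {x y : R} (hxy : IsUnit (x - y)) :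
    (x - y) • ((!![x, y; 1, 1])⁻¹ * !![a, -b; 1, 0] * !![x, y; 1, 1]) =
      !![-companionForm a b x y, -companionForm a b y y;
        companionForm a b x x, companionForm a b y x] := by
  have hdet : (!![x, y; 1, 1]).det = x - y := by
    rw [Matrix.det_fin_two_of, mul_one, mul_one]
  rw [← adjugate_mul_companion_mul, Matrix.inv_def, hdet, Matrix.smul_mul, Matrix.smul_mul,
    smul_smul, Ring.mul_inverse_cancel _ hxy, one_smul]

end CompanionForm

section Norm

open scoped Matrix.Norms.Operator ComplexConjugate

theorem linfty_opNorm_fin_two {E : Type*} [SeminormedAddCommGroup E]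
    (B : Matrix (Fin 2) (Fin 2) E) :
    ‖B‖ = max (‖B 0 0‖ + ‖B 0 1‖) (‖B 1 0‖ + ‖B 1 1‖) := by
  simp [Matrix.linfty_opNorm_def, Fin.univ_succ]

variable {K : Type*} [NormedField K] [StarRing K] [NormedStarGroup K] {a b : K}

theorem norm_companionForm_conj (ha : IsSelfAdjoint a) (hb : IsSelfAdjoint b) (s t : K) :
    ‖companionForm a b (conj s) (conj t)‖ = ‖companionForm a b s t‖ := by
  rw [← norm_star (companionForm a b s t), ← starRingEnd_apply, map_companionForm,
    ha.conj_eq, hb.conj_eq]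

theorem linfty_opNorm_inv_mul_companion_mul (ha : IsSelfAdjoint a) (hb : IsSelfAdjoint b) {x : K}
    (hx : x - conj x ≠ 0) :
    ‖(!![x, conj x; 1, 1])⁻¹ * !![a, -b; 1, 0] * !![x, conj x; 1, 1]‖ =
      (‖companionForm a b x x‖ + ‖companionForm a b x (conj x)‖) / ‖x - conj x‖ := by
  have hdiag : ‖companionForm a b (conj x) (conj x)‖ = ‖companionForm a b x x‖ :=
    norm_companionForm_conj ha hb x x
  have hcross : ‖companionForm a b (conj x) x‖ = ‖companionForm a b x (conj x)‖ := by
    simpa only [starRingEnd_self_apply] using norm_companionForm_conj ha hb x (conj x)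
  rw [eq_div_iff (norm_ne_zero_iff.mpr hx), mul_comm, ← norm_smul,
    sub_smul_inv_mul_companion_mul a b hx.isUnit, linfty_opNorm_fin_two]
  simp only [Matrix.of_apply, Matrix.cons_val', Matrix.cons_val_zero, Matrix.cons_val_one,
    Matrix.cons_val_fin_one, norm_neg, hdiag, hcross]
  rw [add_comm ‖companionForm a b x (conj x)‖, max_self]

end Norm

/-- The elliptic-type matrix norm identity: for real `α, β` and complex `μ` with
`Im μ ≠ 0`, letting `A = [[α, -β],[1, 0]]`, `H = [[μ, μ̄],[1, 1]]` (invertible since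
`Im μ ≠ 0`), the operator norm of `H⁻¹AH` induced by the maximum norm on `ℂ²`
(i.e. the maximum over rows of the sum of absolute values of the entries) equals
`(|μ² - αμ + β| + ||μ|² - αμ + β|) / |μ - μ̄|`. -/
theorem elliptic_norm_formula (α β : ℝ) (μ : ℂ) (hμ : μ.im ≠ 0) :
    (fun B : Matrix (Fin 2) (Fin 2) ℂ =>
        max (‖B 0 0‖ + ‖B 0 1‖)
            (‖B 1 0‖ + ‖B 1 1‖))
      ((!![μ, (starRingEnd ℂ) μ; 1, 1])⁻¹ * !![(α : ℂ), -(β : ℂ); 1, 0]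
        * !![μ, (starRingEnd ℂ) μ; 1, 1])
    = (‖μ^2 - (α : ℂ)*μ + (β : ℂ)‖
        + ‖((‖μ‖^2 : ℝ) : ℂ) - (α : ℂ)*μ + (β : ℂ)‖)
      / ‖μ - (starRingEnd ℂ) μ‖ := by
  have hconj : μ - (starRingEnd ℂ) μ ≠ 0 :=
    sub_ne_zero.mpr fun h => hμ (Complex.conj_eq_iff_im.mp h.symm)
  have hcross : companionForm (α : ℂ) β μ ((starRingEnd ℂ) μ) =
      ((‖μ‖ ^ 2 : ℝ) : ℂ) - α * μ + β := by
    rw [companionForm, Complex.mul_conj, Complex.normSq_eq_norm_sq]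
  rw [← companionForm_self, ← hcross, ← linfty_opNorm_inv_mul_companion_mul
    (Complex.conj_ofReal α) (Complex.conj_ofReal β) hconj]
  exact (linfty_opNorm_fin_two _).symm
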